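/- Let N, s, M be natural numbers with N = s·M and s, M > 0, let π : ZMod N → ZMod M be the reduction homomorphism, let B ⊆ ZMod N be a transversal for π with section β : ZMod M → ZMod N, and let σ : ZMod N → ℂ satisfy 𝓕_N σ = s·1_B. Then Shannon subsampling is diagonal in frequency: for every X : ZMod N → ℂ and every k : ZMod M, 𝓕_M(↓_s(σ ⋆ X))(k) = 𝓕_N X (β k). -/

import Mathlib

open ZMod Finset

noncomputable section

/-- Circular convolution on `ZMod N`: `(f ⋆ g)(n) = ∑ m, f m * g (n - m)`. -/
def cconv {N : ℕ} [NeZero N] (f g : ZMod N → ℂ) : ZMod N → ℂ :=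
  fun n => ∑ m : ZMod N, f m * g (n - m)

/-- Decimation operator `↓_s : (ZMod N → ℂ) → (ZMod M → ℂ)`, `(↓_s f)(k) = f (s * k.val)`. -/
def decim (N M s : ℕ) (f : ZMod N → ℂ) : ZMod M → ℂ :=
  fun k => f ((s * k.val : ℕ) : ZMod N)

/-- `B` is a transversal for `π`: each fiber of `π` contains exactly one element of `B`. -/
def IsTransversal {N M : ℕ} (π : ZMod N → ZMod M) (B : Set (ZMod N)) : Prop :=
  ∀ k : ZMod M, ∃! x : ZMod N, x ∈ B ∧ π x = k

theorem aux_char (N s M : ℕ) [NeZero N] [NeZero M] (hs : 0 < s) (hN : N = s * M)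
    (hd : M ∣ N) (m : ZMod M) (j : ZMod N) :
    stdAddChar (j * ((s * m.val : ℕ) : ZMod N)) = stdAddChar (m * ZMod.castHom hd (ZMod M) j) := by
  have e1 : j * ((s * m.val : ℕ) : ZMod N) = (((j.val * (s * m.val) : ℕ) : ℤ) : ZMod N) := by
    push_cast
    rw [ZMod.natCast_zmod_val]
  have e2 : m * ZMod.castHom hd (ZMod M) j = (((m.val * j.val : ℕ) : ℤ) : ZMod M) := by
    push_cast
    rw [ZMod.natCast_zmod_val, ZMod.castHom_apply, ZMod.natCast_val]
  rw [e1, e2, ZMod.stdAddChar_coe, ZMod.stdAddChar_coe]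
  congr 1
  have h1 : (s : ℂ) ≠ 0 := by exact_mod_cast hs.ne'
  have h2 : (M : ℂ) ≠ 0 := NeZero.ne _
  have h3 : (N : ℂ) = s * M := by rw [hN]; push_cast; rfl
  rw [h3]
  push_cast
  field_simp

theorem aux_conv {N : ℕ} [NeZero N] (f g : ZMod N → ℂ) (k : ZMod N) :
    𝓕 (cconv f g) k = 𝓕 f k * 𝓕 g k := by
  simp only [dft_apply, cconv, smul_eq_mul, Finset.mul_sum, Finset.sum_mul]
  rw [Finset.sum_comm]
  conv_rhs => rw [Finset.sum_comm]
  refine Finset.sum_congr rfl fun m _ => ?_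
  refine Fintype.sum_equiv (Equiv.subRight m) _ _ fun n => ?_
  simp only [Equiv.subRight_apply]
  have : -(n * k) = -(m * k) + -((n - m) * k) := by ring
  rw [this, AddChar.map_add_eq_mul]
  ring

theorem aux_decim (N s M : ℕ) [NeZero N] [NeZero M] (hs : 0 < s) (hN : N = s * M)
    (hd : M ∣ N) (y : ZMod N → ℂ) (k : ZMod M) :
    𝓕 (decim N M s y) k =
      (s : ℂ)⁻¹ * ∑ j : ZMod N, if ZMod.castHom hd (ZMod M) j = k then 𝓕 y j else 0 := by
  have hy : ∀ n, y n = (N : ℂ)⁻¹ * ∑ j : ZMod N, stdAddChar (j * n) * 𝓕 y j := by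
    intro n
    have := invDFT_apply (𝓕 y) n
    rwa [LinearEquiv.symm_apply_apply] at this
  rw [dft_apply]
  simp only [decim, smul_eq_mul]
  have h3 : (N : ℂ) = s * M := by rw [hN]; push_cast; rfl
  have h2 : (M : ℂ) ≠ 0 := NeZero.ne _
  calc ∑ m : ZMod M, stdAddChar (-(m * k)) * y ((s * m.val : ℕ) : ZMod N)
      = ∑ m : ZMod M, ∑ j : ZMod N, (N : ℂ)⁻¹ * (𝓕 y j *
          stdAddChar (m * (ZMod.castHom hd (ZMod M) j - k))) := by
        refine Finset.sum_congr rfl fun m _ => ?_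
        rw [hy, Finset.mul_sum, Finset.mul_sum]
        refine Finset.sum_congr rfl fun j _ => ?_
        rw [aux_char N s M hs hN hd]
        have : m * (ZMod.castHom hd (ZMod M) j - k)
          = -(m * k) + m * ZMod.castHom hd (ZMod M) j := by ring
        rw [this, AddChar.map_add_eq_mul]
        ring
    _ = _ := by
        rw [Finset.sum_comm, Finset.mul_sum]
        refine Finset.sum_congr rfl fun j _ => ?_
        rw [← Finset.mul_sum, ← Finset.mul_sum,
          AddChar.sum_mulShift _ (isPrimitive_stdAddChar M), h3, ZMod.card]
        simp only [sub_eq_zero]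
        split_ifs
        · field_simp
        · simp

/-- Shannon subsampling is diagonal in frequency:
`𝓕_M (↓_s (σ ⋆ X)) k = 𝓕_N X (β k)`. -/
theorem dft_shannon_subsample (N s M : ℕ) [NeZero N] [NeZero M]
    (hs : 0 < s) (hM : 0 < M) (hN : N = s * M)
    (B : Set (ZMod N))
    (hB : IsTransversal (ZMod.castHom (show M ∣ N from ⟨s, by rw [hN]; ring⟩) (ZMod M)) B)
    (β : ZMod M → ZMod N)
    (hβ : ∀ k : ZMod M, β k ∈ B ∧
      ZMod.castHom (show M ∣ N from ⟨s, by rw [hN]; ring⟩) (ZMod M) (β k) = k)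
    (σ : ZMod N → ℂ)
    (hσ : ∀ m : ZMod N, 𝓕 σ m = (s : ℂ) * Set.indicator B (1 : ZMod N → ℂ) m) :
    ∀ (X : ZMod N → ℂ) (k : ZMod M),
      𝓕 (decim N M s (cconv σ X)) k = 𝓕 X (β k) := by
  intro X k
  have hd : M ∣ N := ⟨s, by rw [hN]; ring⟩
  rw [aux_decim N s M hs hN hd]
  have hs' : (s : ℂ) ≠ 0 := by exact_mod_cast hs.ne'
  rw [Finset.sum_eq_single (β k)]
  · rw [if_pos (hβ k).2, aux_conv, hσ, Set.indicator_of_mem (hβ k).1]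
    simp [hs']
  · intro j _ hj
    split_ifs with h
    · have : j ∉ B := fun hjB => hj ((hB k).unique ⟨hjB, h⟩ (hβ k))
      rw [aux_conv, hσ, Set.indicator_of_notMem this]
      simp
    · rfl
  · simp

end
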